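/- arXiv:1608.07317 — 2 statements merged into one kernel-verified Lean document; each statement's English description precedes it below -/
import Mathlib

section
/- Let n > 1, let χ be any Dirichlet character modulo n, and let k be a nonzero integer. Then |Σ_{w mod n} χ(w)·e(kw/n)| ≤ |k| · √n + σ(gcd(n,|k|)), where σ is the sum-of-divisors function. In particular the Gauss-type sum is O_k(√n). -/
open Finset ArithmeticFunction

noncomputable def e (x : ℝ) : ℂ := Complex.exp (2 * Real.pi * Complex.I * x)

section MulChar

variable {R : Type*} [CommRing R] [Fintype R] [DecidableEq R]

lemma MulChar.norm_coe_unit (χ : MulChar R ℂ) (u : Rˣ) : ‖χ u‖ = 1 := by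
  refine Complex.norm_eq_one_of_pow_eq_one (n := Fintype.card Rˣ) ?_ Fintype.card_ne_zero
  rw [← map_pow, ← Units.val_pow_eq_pow_val, pow_card_eq_one, Units.val_one, map_one]

lemma MulChar.norm_le_ite_isUnit (χ : MulChar R ℂ) (w : R) :
    ‖χ w‖ ≤ if IsUnit w then 1 else 0 := by
  split_ifs with hw
  · lift w to Rˣ using hw
    exact (χ.norm_coe_unit w).le
  · rw [χ.map_nonunit hw, norm_zero]

lemma norm_gaussSum_mulShift_unit (χ : MulChar R ℂ) (ψ : AddChar R ℂ) (u : Rˣ) :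
    ‖gaussSum χ (AddChar.mulShift ψ u)‖ = ‖gaussSum χ ψ‖ := by
  rw [← gaussSum_mulShift χ ψ u, norm_mul, χ.norm_coe_unit, one_mul]

/-- The second moment of the Gauss sums along the multiples of `b`. -/
lemma sum_sq_norm_gaussSum_mulShift (χ : MulChar R ℂ) {ψ : AddChar R ℂ} (hψ : ψ.IsPrimitive)
    (b : R) :
    ((∑ a, ‖gaussSum χ (AddChar.mulShift ψ (b * a))‖ ^ 2 : ℝ) : ℂ) =
      ∑ w, ∑ v, χ w * star (χ v) * if b * (w - v) = 0 then (Fintype.card R : ℂ) else 0 := by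
  have horth (c : R) : (if c = 0 then (Fintype.card R : ℂ) else 0) = ∑ a, ψ (a * c) := by
    rw [AddChar.sum_mulShift c hψ]
    push_cast
    rfl
  simp_rw [horth, mul_sum]
  rw [Complex.ofReal_sum]
  simp_rw [Complex.ofReal_pow, ← Complex.mul_conj', gaussSum, map_sum, sum_mul_sum]
  rw [sum_comm]
  refine sum_congr rfl fun w _ ↦ ?_
  rw [sum_comm]
  refine sum_congr rfl fun v _ ↦ sum_congr rfl fun a _ ↦ ?_
  rw [map_mul, AddChar.mulShift_apply, AddChar.mulShift_apply, ← AddChar.map_neg_eq_conj,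
    starRingEnd_apply, mul_mul_mul_comm, ← AddChar.map_add_eq_mul]
  congr 2
  ring

lemma sum_sq_norm_gaussSum_mulShift_le (χ : MulChar R ℂ) {ψ : AddChar R ℂ} (hψ : ψ.IsPrimitive)
    (b : R) :
    ∑ a, ‖gaussSum χ (AddChar.mulShift ψ (b * a))‖ ^ 2 ≤
      (Fintype.card Rˣ * (#{x : R | b * x = 0} * Fintype.card R) : ℝ) := by
  have hfiber (w : R) :
      ∑ v, (if b * (w - v) = 0 then (Fintype.card R : ℝ) else 0) =
        #{x : R | b * x = 0} * Fintype.card R := by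
    refine ((Equiv.subLeft w).sum_comp
      fun x ↦ if b * x = 0 then (Fintype.card R : ℝ) else 0).trans ?_
    rw [← sum_filter, sum_const, nsmul_eq_mul]
  have hunits : ∑ w : R, (if IsUnit w then (1 : ℝ) else 0) = Fintype.card Rˣ := by
    have hfilter : ({w : R | IsUnit w} : Finset R) =
        univ.map ⟨Units.val, Units.val_injective⟩ := by
      ext w
      simp only [mem_filter, mem_univ, true_and, mem_map]
      rfl
    rw [sum_boole, hfilter, card_map, card_univ]
  calc
    _ = ‖((∑ a, ‖gaussSum χ (AddChar.mulShift ψ (b * a))‖ ^ 2 : ℝ) : ℂ)‖ := by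
      rw [Complex.norm_real, Real.norm_of_nonneg (by positivity)]
    _ ≤ ∑ w : R, ∑ v, (if IsUnit w then (1 : ℝ) else 0) *
        if b * (w - v) = 0 then (Fintype.card R : ℝ) else 0 := by
      rw [sum_sq_norm_gaussSum_mulShift χ hψ]
      refine norm_sum_le_of_le _ fun w _ ↦ norm_sum_le_of_le _ fun v _ ↦ ?_
      rw [norm_mul, norm_mul, norm_star]
      have hv : ‖χ v‖ ≤ 1 := (χ.norm_le_ite_isUnit v).trans (by split_ifs <;> norm_num)
      refine mul_le_mul ((mul_le_of_le_one_right (norm_nonneg _) hv).trans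
        (χ.norm_le_ite_isUnit w)) (by split_ifs <;> simp) (norm_nonneg _)
        (by split_ifs <;> norm_num)
    _ = _ := by simp_rw [← mul_sum, hfiber, ← sum_mul, hunits]

/-- A Gauss sum with respect to the shift by `b` of a primitive additive character is bounded in
terms of the annihilator of `b`. -/
lemma sq_norm_gaussSum_mulShift_le (χ : MulChar R ℂ) {ψ : AddChar R ℂ} (hψ : ψ.IsPrimitive)
    (b : R) :
    ‖gaussSum χ (AddChar.mulShift ψ b)‖ ^ 2 ≤
      (#{x : R | b * x = 0} * Fintype.card R : ℝ) := by
  have hpos : (0 : ℝ) < Fintype.card Rˣ := mod_cast Fintype.card_pos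
  refine le_of_mul_le_mul_left ?_ hpos
  refine le_trans ?_ (sum_sq_norm_gaussSum_mulShift_le χ hψ b)
  calc
    _ = ∑ u : Rˣ, ‖gaussSum χ (AddChar.mulShift ψ (b * u))‖ ^ 2 := by
      simp_rw [← AddChar.mulShift_mulShift, norm_gaussSum_mulShift_unit]
      simp
    _ = ∑ a ∈ univ.map ⟨Units.val, Units.val_injective⟩,
        ‖gaussSum χ (AddChar.mulShift ψ (b * a))‖ ^ 2 := by
      rw [sum_map]
      rfl
    _ ≤ _ := sum_le_univ_sum_of_nonneg fun _ ↦ by positivity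

end MulChar

lemma ZMod.card_filter_intCast_mul_eq_zero_le (n : ℕ) [NeZero n] {k : ℤ} (hk : k ≠ 0) :
    #{x : ZMod n | (k : ZMod n) * x = 0} ≤ k.natAbs := by
  convert IsAddCyclic.card_nsmul_eq_zero_le (α := ZMod n) (Int.natAbs_pos.mpr hk) using 3
  rename_i x
  rw [← zsmul_eq_mul, ← natCast_zsmul]
  rcases Int.natAbs_eq k with h | h <;> rw [h] <;> simp

lemma sum_range_dirichletCharacter_mul_e (n : ℕ) [NeZero n] (χ : DirichletCharacter ℂ n) (k : ℤ) :
    ∑ w ∈ range n, χ (w : ZMod n) * e ((k : ℝ) * w / n) =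
      gaussSum χ (AddChar.mulShift ZMod.stdAddChar (k : ZMod n)) := by
  refine sum_bij' (fun w _ ↦ (w : ZMod n)) (fun a _ ↦ a.val) (by simp)
    (fun a _ ↦ mem_range.mpr a.val_lt) (fun w hw ↦ ZMod.val_cast_of_lt (mem_range.mp hw))
    (by simp) fun w _ ↦ ?_
  have h : (k : ZMod n) * w = ((k * w : ℤ) : ZMod n) := by push_cast; rfl
  rw [AddChar.mulShift_apply, h, ZMod.stdAddChar_coe, e]
  push_cast
  ring_nf

/-- Gauss-type sums of arbitrary Dirichlet characters are O_k(√n). -/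
theorem gauss_sum_general_bound (n : ℕ) (hn : 1 < n) (χ : DirichletCharacter ℂ n)
    (k : ℤ) (hk : k ≠ 0) :
    ‖∑ w ∈ Finset.range n, χ (w : ZMod n) * e ((k : ℝ) * w / n)‖ ≤
      (k.natAbs : ℝ) * Real.sqrt n + (sigma 1 (Nat.gcd n k.natAbs) : ℝ) := by
  have : NeZero n := ⟨by omega⟩
  rw [sum_range_dirichletCharacter_mul_e]
  refine le_add_of_le_of_nonneg ?_ (Nat.cast_nonneg _)
  refine le_of_sq_le_sq ?_ (by positivity)
  have hk1 : (1 : ℝ) ≤ k.natAbs := mod_cast Int.natAbs_pos.mpr hk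
  have hcard : (#{x : ZMod n | (k : ZMod n) * x = 0} : ℝ) ≤ k.natAbs :=
    mod_cast ZMod.card_filter_intCast_mul_eq_zero_le n hk
  calc
    _ ≤ (#{x : ZMod n | (k : ZMod n) * x = 0} * Fintype.card (ZMod n) : ℝ) :=
      sq_norm_gaussSum_mulShift_le χ (ZMod.isPrimitive_stdAddChar n) _
    _ ≤ (k.natAbs : ℝ) ^ 2 * n := by
      rw [ZMod.card]
      gcongr
      exact hcard.trans (le_self_pow₀ hk1 two_ne_zero)
    _ = _ := by rw [mul_pow, Real.sq_sqrt n.cast_nonneg]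
end

section
/- Fix a nonzero integer k. As n → ∞ through odd composite integers, (1/#W(n))·Σ_{w ∈ W(n)} e(kw/n) → 0, where W(n) is the set of Miller-Rabin witnesses of n. -/
open Finset Filter

/-- The 2-adic valuation of n - 1. -/
def s2 (n : ℕ) : ℕ := (n - 1).factorization 2

/-- The odd part of n - 1. -/
def oddPart (n : ℕ) : ℕ := (n - 1) / 2 ^ s2 n

/-- The Miller-Rabin witness set of n. -/
def witnessSet (n : ℕ) : Finset ℕ :=
  (Finset.range n).filter (fun a => 1 < a ∧ Nat.gcd a n = 1 ∧
    (a : ZMod n) ^ oddPart n ≠ 1 ∧ ∀ j < s2 n, (a : ZMod n) ^ (2 ^ j * oddPart n) ≠ -1)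

lemma card_units_mul_eq_le {n : ℕ} [NeZero n] {k : ℤ} (hk : k ≠ 0) (a : ZMod n) :
    #{u : (ZMod n)ˣ | (k : ZMod n) * u = a} ≤ k.natAbs := by
  refine le_trans ?_ (IsAddCyclic.card_nsmul_eq_zero_le (α := ZMod n) (Int.natAbs_pos.mpr hk))
  rcases (filter (fun u : (ZMod n)ˣ => (k : ZMod n) * u = a) univ).eq_empty_or_nonempty
    with h | ⟨v, hv⟩
  · simp [h]
  · refine card_le_card_of_injOn (fun u => (u : ZMod n) - v) ?_ ?_
    · intro u hu
      simp only [coe_filter, mem_univ, true_and, Set.mem_ofPred_eq, mem_filter] at hu hv ⊢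
      have h : k • ((u : ZMod n) - v) = 0 := by rw [zsmul_eq_mul, mul_sub, hu, hv, sub_self]
      rcases Int.natAbs_eq k with hk' | hk'
      · rw [hk', natCast_zsmul] at h; exact h
      · rw [hk', neg_smul, neg_eq_zero, natCast_zsmul] at h; exact h
    · intro u _ w _ h
      exact Units.ext (sub_left_injective h)

lemma sum_norm_sq_stdAddChar {n : ℕ} [NeZero n] (A : Finset (ZMod n)ˣ) :
    ∑ a : ZMod n, ‖∑ u ∈ A, ZMod.stdAddChar (N := n) (a * (u : ZMod n))‖ ^ 2 = (n : ℝ) * #A := by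
  have key : ∀ a : ZMod n, ((‖∑ u ∈ A, ZMod.stdAddChar (N := n) (a * (u : ZMod n))‖ ^ 2 : ℝ) : ℂ) =
      ∑ u ∈ A, ∑ v ∈ A, ZMod.stdAddChar (N := n) (a * ((u : ZMod n) - v)) := by
    intro a
    rw [Complex.ofReal_pow, ← Complex.mul_conj', map_sum, sum_mul_sum]
    refine sum_congr rfl fun u _ => sum_congr rfl fun v _ => ?_
    rw [← AddChar.map_neg_eq_conj, ← AddChar.map_add_eq_mul]
    congr 1; ring
  have : ((∑ a : ZMod n, ‖∑ u ∈ A, ZMod.stdAddChar (N := n) (a * (u : ZMod n))‖ ^ 2 : ℝ) : ℂ) =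
      (n : ℂ) * #A := by
    rw [Complex.ofReal_sum, sum_congr rfl fun a _ => key a, sum_comm]
    have h2 : ∀ u ∈ A, ∑ a : ZMod n, ∑ v ∈ A, ZMod.stdAddChar (N := n) (a * ((u : ZMod n) - v))
        = (n : ℂ) := by
      intro u hu
      rw [sum_comm]
      have h1 : ∀ v ∈ A, ∑ a : ZMod n, ZMod.stdAddChar (N := n) (a * ((u : ZMod n) - v)) =
          if u = v then (n : ℂ) else 0 := by
        intro v _
        rw [AddChar.sum_mulShift _ (ZMod.isPrimitive_stdAddChar n), ZMod.card]
        simp [sub_eq_zero, Units.ext_iff]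
      rw [sum_congr rfl h1]
      simp [hu]
    rw [sum_congr rfl h2]
    simp [mul_comm]
  exact_mod_cast this

/-- Exponential sums over solution sets of `u ^ m = t` in `(ℤ/n)ˣ` have square-root size. -/
lemma norm_sq_sum_pow_eq_le {n : ℕ} [NeZero n] {k : ℤ} (hk : k ≠ 0) (m : ℕ) (t : (ZMod n)ˣ) :
    ‖∑ u : (ZMod n)ˣ with u ^ m = t, ZMod.stdAddChar (N := n) ((k : ZMod n) * u)‖ ^ 2 ≤
      (k.natAbs : ℝ) * n := by
  set A : Finset (ZMod n)ˣ := univ.filter (fun u => u ^ m = t) with hA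
  set H : Finset (ZMod n)ˣ := univ.filter (fun u => u ^ m = 1) with hH
  set S : ZMod n → ℝ := fun a => ‖∑ u ∈ A, ZMod.stdAddChar (N := n) (a * (u : ZMod n))‖ ^ 2 with hS
  have hHpos : 0 < #H := card_pos.mpr ⟨1, by simp [hH]⟩
  have hAH : #A ≤ #H := by
    rcases A.eq_empty_or_nonempty with h | ⟨v, hv⟩
    · simp [h]
    · refine card_le_card_of_injOn (fun u => u / v) ?_ ?_
      · intro u hu
        simp only [hA, hH, coe_filter, mem_univ, true_and, Set.mem_ofPred_eq, mem_filter] at hu hv ⊢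
        rw [div_pow, hu, hv, div_self']
      · intro u _ w _ h
        exact div_left_injective h
  have hinv : ∀ h ∈ H, S (k * (h : ZMod n)) = S k := by
    intro h hh
    simp only [hH, mem_filter, mem_univ, true_and] at hh
    simp only [hS]
    congr 2
    refine sum_bij' (fun u _ => h * u) (fun u _ => h⁻¹ * u) ?_ ?_ ?_ ?_ ?_
    · intro u hu; simpa [hA, mul_pow, hh] using hu
    · intro u hu; simpa [hA, mul_pow, hh] using hu
    · intro u _; simp
    · intro u _; simp
    · intro u _; simp [mul_assoc]
  have hle : (#H : ℝ) * S k ≤ #H * (k.natAbs * n) := by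
    calc (#H : ℝ) * S k = ∑ h ∈ H, S (k * (h : ZMod n)) := by
          rw [sum_congr rfl hinv, sum_const, nsmul_eq_mul]
      _ ≤ ∑ h : (ZMod n)ˣ, S (k * (h : ZMod n)) :=
          sum_le_univ_sum_of_nonneg fun _ => by positivity
      _ = ∑ a : ZMod n, #{u : (ZMod n)ˣ | (k : ZMod n) * u = a} * S a := by
          rw [← sum_fiberwise univ (fun h : (ZMod n)ˣ => (k : ZMod n) * h)]
          refine sum_congr rfl fun a _ => ?_
          rw [← nsmul_eq_mul, ← sum_const]
          refine sum_congr rfl fun u hu => ?_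
          rw [(mem_filter.mp hu).2]
      _ ≤ ∑ a : ZMod n, k.natAbs * S a := by
          refine sum_le_sum fun a _ => ?_
          have := card_units_mul_eq_le hk a
          gcongr
      _ = k.natAbs * (n * #A) := by rw [← mul_sum, sum_norm_sq_stdAddChar]
      _ ≤ k.natAbs * (n * #H) := by gcongr
      _ = _ := by ring
  exact le_of_mul_le_mul_left hle (by exact_mod_cast hHpos)

lemma two_pow_s2_mul_oddPart (n : ℕ) : 2 ^ s2 n * oddPart n = n - 1 :=
  Nat.ordProj_mul_ordCompl_eq_self _ _

lemma odd_oddPart {n : ℕ} (hn : 1 < n) : Odd (oddPart n) := by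
  rw [← Nat.not_even_iff_odd, even_iff_two_dvd]
  exact Nat.not_dvd_ordCompl Nat.prime_two (by omega)

lemma s2_pos {n : ℕ} (hn : 1 < n) (hodd : Odd n) : 0 < s2 n := by
  refine Nat.Prime.factorization_pos_of_dvd Nat.prime_two (by omega) ?_
  obtain ⟨m, rfl⟩ := hodd
  simp

lemma s2_le_log (n : ℕ) : s2 n ≤ Nat.log 2 n := by
  rcases Nat.eq_zero_or_pos (n - 1) with h | h
  · simp [s2, h]
  · exact Nat.le_log_of_pow_le one_lt_two
      ((Nat.le_of_dvd h (Nat.ordProj_dvd _ _)).trans (Nat.sub_le _ _))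

/-- The strong liars of `n`, as a set of units. -/
def liarSet (n : ℕ) [NeZero n] : Finset (ZMod n)ˣ :=
  {u | u ^ oddPart n = 1 ∨ ∃ j < s2 n, u ^ (2 ^ j * oddPart n) = -1}

lemma mem_liarSet {n : ℕ} [NeZero n] {u : (ZMod n)ˣ} : u ∈ liarSet n ↔
    u ^ oddPart n = 1 ∨ ∃ j < s2 n, u ^ (2 ^ j * oddPart n) = -1 := by
  simp [liarSet]

lemma pow_two_pow_mul_eq_one {M : Type*} [Monoid M] [HasDistribNeg M] {u : M} {i j d : ℕ}
    (h : u ^ (2 ^ i * d) = -1) (hij : i < j) : u ^ (2 ^ j * d) = 1 := by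
  obtain ⟨c, rfl⟩ := Nat.exists_eq_add_of_lt hij
  rw [show 2 ^ (i + c + 1) * d = 2 ^ i * d * 2 * 2 ^ c by ring, pow_mul, pow_mul, h]
  simp

lemma pow_pred_eq_one_of_mem_liarSet {n : ℕ} [NeZero n] {u : (ZMod n)ˣ} (hu : u ∈ liarSet n) :
    u ^ (n - 1) = 1 := by
  rw [← two_pow_s2_mul_oddPart]
  rcases mem_liarSet.mp hu with h | ⟨j, hj, h⟩
  · rw [mul_comm, pow_mul, h, one_pow]
  · exact pow_two_pow_mul_eq_one h hj

lemma exists_ne_top_of_sq_dvd {n p : ℕ} [NeZero n] (hp : p.Prime) (hpn : p * p ∣ n) :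
    ∃ K : Subgroup (ZMod n)ˣ, K ≠ ⊤ ∧ ∀ u ∈ liarSet n, u ∈ K := by
  refine ⟨(powMonoidHom (n - 1)).ker, ?_, fun u hu => ?_⟩
  · intro htop
    have := Fact.mk hp
    have hdvd : p ∣ Fintype.card (ZMod n)ˣ := by
      rw [ZMod.card_units_eq_totient]
      refine dvd_trans ?_ (Nat.totient_dvd_of_dvd hpn)
      rw [← sq, Nat.totient_prime_pow hp two_pos]
      simp
    obtain ⟨x, hx⟩ := exists_prime_orderOf_dvd_card p hdvd
    have hxK : x ∈ (powMonoidHom (n - 1) : (ZMod n)ˣ →* (ZMod n)ˣ).ker := htop ▸ Subgroup.mem_top x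
    have h1 : p ∣ n - 1 := by
      rw [← hx]
      exact orderOf_dvd_of_pow_eq_one hxK
    have h2 : p ∣ n := (dvd_mul_right p p).trans hpn
    have h3 : p ∣ 1 := by
      have := Nat.dvd_sub h2 h1
      rwa [Nat.sub_sub_self (NeZero.one_le)] at this
    exact hp.one_lt.ne' (Nat.dvd_one.mp h3)
  · exact pow_pred_eq_one_of_mem_liarSet hu

lemma units_neg_one_ne_one {n : ℕ} (hn : 2 < n) : (-1 : (ZMod n)ˣ) ≠ 1 := by
  have := Fact.mk hn
  intro h
  exact ZMod.neg_one_ne_one (n := n) (by simpa using congrArg Units.val h)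

lemma exists_ne_top_of_coprime {p m : ℕ} [NeZero (p * m)] (hpm : p.Coprime m) (hp : 2 < p)
    (hm : 2 < m) (hodd : Odd (p * m)) :
    ∃ K : Subgroup (ZMod (p * m))ˣ, K ≠ ⊤ ∧ ∀ u ∈ liarSet (p * m), u ∈ K := by
  classical
  have hn : 1 < p * m := by nlinarith
  obtain ⟨j, ⟨hj, a, ha⟩, hmax⟩ :
      ∃ j, (j < s2 (p * m) ∧ ∃ a : (ZMod (p * m))ˣ, a ^ (2 ^ j * oddPart (p * m)) = -1) ∧
      ∀ i, (i < s2 (p * m) ∧ ∃ a : (ZMod (p * m))ˣ, a ^ (2 ^ i * oddPart (p * m)) = -1) → i ≤ j := by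
    set P : ℕ → Prop := fun j =>
      j < s2 (p * m) ∧ ∃ a : (ZMod (p * m))ˣ, a ^ (2 ^ j * oddPart (p * m)) = -1
    have h0 : P 0 := ⟨s2_pos hn hodd, -1, by simpa using (odd_oddPart hn).neg_one_pow⟩
    exact ⟨Nat.findGreatest P (s2 (p * m)), Nat.findGreatest_spec (Nat.zero_le _) h0,
      fun i hi => Nat.le_findGreatest hi.1.le hi⟩
  refine ⟨(Subgroup.zpowers (-1 : (ZMod (p * m))ˣ)).comap
    (powMonoidHom (2 ^ j * oddPart (p * m))), ?_, fun u hu => ?_⟩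
  · intro htop
    let f : (ZMod (p * m))ˣ ≃* (ZMod p)ˣ × (ZMod m)ˣ :=
      (Units.mapEquiv (ZMod.chineseRemainder hpm).toMulEquiv).trans MulEquiv.prodUnits
    have hf : f (-1) = (-1, -1) := by
      ext <;> simp [f, MulEquiv.prodUnits]
    have hmem : f.symm ((f a).1, 1) ∈ (Subgroup.zpowers (-1 : (ZMod (p * m))ˣ)).comap
        (powMonoidHom (2 ^ j * oddPart (p * m))) :=
      htop ▸ Subgroup.mem_top _
    rw [Subgroup.mem_comap, powMonoidHom_apply, ← map_pow, Prod.pow_mk, ← Prod.pow_fst, ← map_pow,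
      ha, hf, one_pow, Subgroup.mem_zpowers_iff] at hmem
    obtain ⟨z, hz⟩ := hmem
    have hz' := congrArg f hz
    rw [map_zpow, hf, MulEquiv.apply_symm_apply, Prod.ext_iff] at hz'
    simp only [Prod.pow_fst, Prod.pow_snd] at hz'
    rcases Int.even_or_odd z with h | h
    · rw [h.neg_one_zpow] at hz'
      exact units_neg_one_ne_one hp hz'.1.symm
    · rw [h.neg_one_zpow] at hz'
      exact units_neg_one_ne_one hm (h.neg_one_zpow.symm.trans hz'.2)
  · rw [Subgroup.mem_comap, powMonoidHom_apply]
    rcases mem_liarSet.mp hu with h | ⟨i, hi, h⟩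
    · rw [mul_comm (2 ^ j), pow_mul, h, one_pow]
      exact one_mem _
    · rcases (hmax i ⟨hi, u, h⟩).lt_or_eq with hij | rfl
      · rw [pow_two_pow_mul_eq_one h hij]
        exact one_mem _
      · rw [h]
        exact Subgroup.mem_zpowers _

lemma exists_ne_top_of_composite {n : ℕ} [NeZero n] (hodd : Odd n) (hn : 1 < n)
    (hp : ¬ n.Prime) : ∃ K : Subgroup (ZMod n)ˣ, K ≠ ⊤ ∧ ∀ u ∈ liarSet n, u ∈ K := by
  by_cases hsq : Squarefree n
  · obtain ⟨m, hm⟩ := Nat.minFac_dvd n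
    have hprime := Nat.minFac_prime hn.ne'
    generalize n.minFac = q at hm hprime
    subst hm
    obtain ⟨h1, h2⟩ := Nat.odd_mul.mp hodd
    have hm1 : m ≠ 1 := by rintro rfl; exact hp (by simpa using hprime)
    refine exists_ne_top_of_coprime (Nat.squarefree_mul_iff.mp hsq).1 ?_ ?_ hodd
    · have := hprime.two_le
      obtain ⟨c, rfl⟩ := h1
      omega
    · obtain ⟨c, rfl⟩ := h2
      omega
  · rw [Nat.squarefree_iff_prime_squarefree] at hsq
    push Not at hsq
    obtain ⟨q, hq, hdvd⟩ := hsq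
    exact exists_ne_top_of_sq_dvd hq hdvd

lemma two_mul_card_liarSet_le {n : ℕ} [NeZero n] (hodd : Odd n) (hn : 1 < n)
    (hp : ¬ n.Prime) : 2 * #(liarSet n) ≤ n.totient := by
  obtain ⟨K, hK, hsub⟩ := exists_ne_top_of_composite hodd hn hp
  have h1 : #(liarSet n) ≤ Nat.card K := by
    rw [← Set.ncard_coe_finset, ← Nat.card_coe_set_eq]
    exact Nat.card_mono (Set.toFinite _) (fun u hu => hsub u hu)
  have h2 := K.card_mul_index
  have h3 := Subgroup.one_lt_index_of_ne_top hK
  rw [Nat.card_eq_fintype_card (α := (ZMod n)ˣ), ZMod.card_units_eq_totient] at h2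
  nlinarith

lemma mem_witnessSet_val {n : ℕ} [NeZero n] (hn : 1 < n) (u : (ZMod n)ˣ) :
    (u : ZMod n).val ∈ witnessSet n ↔ u ∉ liarSet n := by
  have hne : (u : ZMod n).val ≠ 0 := by
    have := Fact.mk hn
    rw [Ne, ZMod.val_eq_zero]
    exact u.ne_zero
  have h1 (m : ℕ) : (u : ZMod n) ^ m = 1 ↔ u ^ m = 1 := by simp [Units.ext_iff]
  have h2 (m : ℕ) : (u : ZMod n) ^ m = -1 ↔ u ^ m = -1 := by simp [Units.ext_iff]
  have hone : (u : ZMod n).val = 1 → u ∈ liarSet n := by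
    intro h
    have hu : u = 1 := by
      rw [Units.ext_iff, ← ZMod.natCast_zmod_val (u : ZMod n), h]
      simp
    exact mem_liarSet.mpr (Or.inl (by rw [hu, one_pow]))
  have hlt : u ∉ liarSet n → 1 < (u : ZMod n).val := by
    intro hu
    have : (u : ZMod n).val ≠ 1 := fun h => hu (hone h)
    omega
  simp only [witnessSet, mem_filter, mem_range, ZMod.val_lt, ZMod.natCast_zmod_val, Ne, h1, h2,
    true_and, show Nat.gcd (u : ZMod n).val n = 1 from ZMod.val_coe_unit_coprime u]
  refine ⟨fun h hu => ?_, fun hu => ⟨hlt hu, ?_⟩⟩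
  · rcases mem_liarSet.mp hu with h' | ⟨j, hj, h'⟩
    · exact h.2.1 h'
    · exact h.2.2 j hj h'
  · rw [mem_liarSet] at hu
    push Not at hu
    exact hu

lemma sum_witnessSet {n : ℕ} [NeZero n] (hn : 1 < n) {M : Type*} [AddCommMonoid M] (f : ℕ → M) :
    ∑ w ∈ witnessSet n, f w = ∑ u ∈ (liarSet n)ᶜ, f (u : ZMod n).val := by
  symm
  refine sum_bij (fun u _ => (u : ZMod n).val) ?_ ?_ ?_ ?_
  · intro u hu
    exact (mem_witnessSet_val hn u).mpr (mem_compl.mp hu)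
  · intro u _ v _ h
    exact Units.ext (ZMod.val_injective n h)
  · intro w hw
    have hw' := mem_filter.mp hw
    have hval : ((ZMod.unitOfCoprime w hw'.2.2.1 : (ZMod n)ˣ) : ZMod n).val = w := by
      rw [ZMod.coe_unitOfCoprime, ZMod.val_cast_of_lt (mem_range.mp hw'.1)]
    refine ⟨_, ?_, hval⟩
    rw [mem_compl, ← mem_witnessSet_val hn, hval]
    exact hw
  · intro _ _; rfl

lemma totient_le_two_mul_card_witnessSet {n : ℕ} [NeZero n] (hodd : Odd n) (hn : 1 < n)
    (hp : ¬ n.Prime) : n.totient ≤ 2 * #(witnessSet n) := by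
  have h1 : #(witnessSet n) = #(liarSet n)ᶜ := by
    rw [card_eq_sum_ones, card_eq_sum_ones, sum_witnessSet hn fun _ => 1]
  have h2 := two_mul_card_liarSet_le hodd hn hp
  have h3 := card_compl_add_card (liarSet n)
  rw [ZMod.card_units_eq_totient] at h3
  omega

lemma sum_liarSet {n : ℕ} [NeZero n] (hn : 2 < n) {M : Type*} [AddCommMonoid M]
    (f : (ZMod n)ˣ → M) : ∑ u ∈ liarSet n, f u = ∑ u with u ^ oddPart n = 1, f u +
      ∑ j ∈ range (s2 n), ∑ u with u ^ (2 ^ j * oddPart n) = -1, f u := by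
  have hne := units_neg_one_ne_one hn
  rw [← sum_biUnion, ← sum_union]
  · congr 1
    ext u
    simp [mem_liarSet]
  · rw [disjoint_left]
    intro u hu hu'
    simp only [mem_biUnion, mem_filter, mem_univ, true_and] at hu hu'
    obtain ⟨j, -, hj⟩ := hu'
    rw [mul_comm, pow_mul, hu, one_pow] at hj
    exact hne hj.symm
  · intro i _ j _ hij
    rw [Function.onFun, disjoint_left]
    intro u hu hu'
    simp only [mem_filter, mem_univ, true_and] at hu hu'
    rcases hij.lt_or_gt with h | h
    · exact hne (hu'.symm.trans (pow_two_pow_mul_eq_one hu h))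
    · exact hne (hu.symm.trans (pow_two_pow_mul_eq_one hu' h))

lemma cube_le_totient_pow_five {n : ℕ} (hn : Odd n) : n ^ 3 ≤ n.totient ^ 5 := by
  induction n using Nat.recOnPosPrimePosCoprime with
  | zero => simp
  | one => simp
  | prime_pow p a hp ha =>
    rw [Nat.totient_prime_pow hp ha]
    have h2 : p ≠ 2 := by
      rintro rfl
      exact absurd hn (by simp [Nat.even_pow, ha.ne'])
    obtain ⟨q, rfl⟩ : ∃ q, p = q + 3 := ⟨p - 3, by have := hp.two_le; omega⟩
    obtain ⟨b, rfl⟩ : ∃ b, a = b + 1 := ⟨a - 1, by omega⟩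
    simp only [Nat.add_sub_cancel, mul_pow, pow_succ _ b]
    have h1 : (q + 3) ^ 3 ≤ (q + 3 - 1) ^ 5 := by
      show (q + 3) ^ 3 ≤ (q + 2) ^ 5
      ring_nf
      nlinarith [Nat.zero_le (q^4), Nat.zero_le (q^5), Nat.zero_le (q^3)]
    gcongr ?_ * ?_
    · exact Nat.pow_le_pow_right (by positivity) (by norm_num)
  | coprime a b ha hb hab iha ihb =>
    rw [Nat.totient_mul hab, mul_pow, mul_pow]
    rw [Nat.odd_mul] at hn
    exact Nat.mul_le_mul (iha hn.1) (ihb hn.2)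

lemma rpow_le_totient {n : ℕ} (hn : Odd n) : (n : ℝ) ^ (3 / 5 : ℝ) ≤ n.totient := by
  have h : (n : ℝ) ^ 3 ≤ (n.totient : ℝ) ^ 5 := by exact_mod_cast cube_le_totient_pow_five hn
  have h1 := Real.rpow_le_rpow (z := (1 / 5 : ℝ)) (by positivity) h (by norm_num)
  rw [← Real.rpow_natCast, ← Real.rpow_natCast, ← Real.rpow_mul (by positivity),
    ← Real.rpow_mul (by positivity)] at h1
  norm_num at h1 ⊢
  exact h1

lemma e_mul_val_div {n : ℕ} [NeZero n] (k : ℤ) (a : ZMod n) :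
    e ((k : ℝ) * a.val / n) = ZMod.stdAddChar (N := n) ((k : ZMod n) * a) := by
  have h : (k : ZMod n) * a = ((k * (a.val : ℤ) : ℤ) : ZMod n) := by simp
  rw [h, ZMod.stdAddChar_coe, e]
  push_cast
  congr 1
  ring

lemma norm_sum_witnessSet_le {n : ℕ} (hn : 2 < n) {k : ℤ} (hk : k ≠ 0) :
    ‖∑ w ∈ witnessSet n, e ((k : ℝ) * w / n)‖ ≤ (Nat.log 2 n + 2) * √(k.natAbs * n) := by
  have : NeZero n := ⟨by omega⟩
  set B := √((k.natAbs : ℝ) * n)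
  set f : (ZMod n)ˣ → ℂ := fun u => ZMod.stdAddChar (N := n) ((k : ZMod n) * u)
  have hB (m : ℕ) (t : (ZMod n)ˣ) : ‖∑ u with u ^ m = t, f u‖ ≤ B :=
    Real.le_sqrt_of_sq_le (norm_sq_sum_pow_eq_le hk m t)
  have hL : ‖∑ u ∈ liarSet n, f u‖ ≤ B + s2 n * B := by
    rw [sum_liarSet hn]
    refine (norm_add_le _ _).trans (add_le_add (hB _ _) ((norm_sum_le _ _).trans ?_))
    refine (sum_le_sum fun j _ => hB _ _).trans ?_
    simp
  have hU : ‖∑ u, f u‖ ≤ B := by simpa using hB 0 1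
  have hs : (s2 n : ℝ) ≤ Nat.log 2 n := by exact_mod_cast s2_le_log n
  have hB0 : 0 ≤ B := Real.sqrt_nonneg _
  have hW : ∑ w ∈ witnessSet n, e ((k : ℝ) * w / n) = ∑ u, f u - ∑ u ∈ liarSet n, f u := by
    rw [sum_witnessSet (by omega) fun w => e ((k : ℝ) * w / n), eq_sub_iff_add_eq,
      ← sum_compl_add_sum (liarSet n)]
    simp only [e_mul_val_div, f]
  rw [hW]
  calc _ ≤ _ := norm_sub_le _ _
    _ ≤ B + (B + s2 n * B) := add_le_add hU hL
    _ ≤ (Nat.log 2 n + 2) * B := by nlinarith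

lemma norm_witness_average_le {n : ℕ} (hodd : Odd n) (hp : ¬ n.Prime) (hn : 1 < n) {k : ℤ}
    (hk : k ≠ 0) :
    ‖(∑ w ∈ witnessSet n, e ((k : ℝ) * w / n)) / ((witnessSet n).card : ℂ)‖ ≤
      4 * √k.natAbs * (Real.log n / (n : ℝ) ^ (1 / 10 : ℝ) + (n : ℝ) ^ (-(1 / 10) : ℝ)) := by
  have : NeZero n := ⟨by omega⟩
  have hn2 : 2 < n := by
    obtain ⟨c, rfl⟩ := hodd
    omega
  have hn0 : (0 : ℝ) < n := by positivity
  have hcard : (n : ℝ) ^ (3 / 5 : ℝ) / 2 ≤ #(witnessSet n) := by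
    have h1 : (n.totient : ℝ) ≤ 2 * #(witnessSet n) := by
      exact_mod_cast totient_le_two_mul_card_witnessSet hodd hn hp
    linarith [rpow_le_totient hodd]
  have hlog : (Nat.log 2 n : ℝ) ≤ 2 * Real.log n := by
    have h1 : (Nat.log 2 n : ℝ) * Real.log 2 ≤ Real.log n := by
      rw [← Real.log_pow]
      exact Real.log_le_log (by positivity) (by exact_mod_cast Nat.pow_log_le_self 2 (by omega))
    have h2 := Real.log_two_gt_d9
    nlinarith [(Nat.cast_nonneg (Nat.log 2 n) : (0 : ℝ) ≤ _)]
  have hpow : (n : ℝ) ^ (3 / 5 : ℝ) = √n * (n : ℝ) ^ (1 / 10 : ℝ) := by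
    rw [Real.sqrt_eq_rpow, ← Real.rpow_add hn0]
    norm_num
  rw [norm_div, Complex.norm_natCast]
  calc _ ≤ (Nat.log 2 n + 2) * √(k.natAbs * n) / ((n : ℝ) ^ (3 / 5 : ℝ) / 2) := by
        gcongr
        exact norm_sum_witnessSet_le hn2 hk
    _ ≤ (2 * Real.log n + 2) * √(k.natAbs * n) / ((n : ℝ) ^ (3 / 5 : ℝ) / 2) := by gcongr
    _ = _ := by
        rw [hpow, Real.sqrt_mul (Nat.cast_nonneg _), Real.rpow_neg hn0.le]
        have : 0 < √(n : ℝ) := Real.sqrt_pos.mpr hn0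
        have : 0 < (n : ℝ) ^ (1 / 10 : ℝ) := by positivity
        field_simp
        ring

/-- the normalized witness exponential sum tends to 0 along odd
composite integers. -/
theorem witness_sum_normalized_tendsto_zero (k : ℤ) (hk : k ≠ 0) :
    Tendsto (fun n : ℕ => (∑ w ∈ witnessSet n, e ((k : ℝ) * w / n)) / ((witnessSet n).card : ℂ))
      (atTop ⊓ Filter.principal {n : ℕ | Odd n ∧ ¬ n.Prime ∧ 1 < n}) (nhds 0) := by
  have hbound : Tendsto (fun n : ℕ => 4 * √k.natAbs *
      (Real.log n / (n : ℝ) ^ (1 / 10 : ℝ) + (n : ℝ) ^ (-(1 / 10) : ℝ))) atTop (nhds 0) := by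
    have h1 := (isLittleO_log_rpow_atTop (r := 1 / 10) (by norm_num)).tendsto_div_nhds_zero
    have h2 := tendsto_rpow_neg_atTop (y := 1 / 10) (by norm_num)
    simpa [Function.comp_def] using
      ((h1.add h2).const_mul (4 * √(k.natAbs : ℝ))).comp tendsto_natCast_atTop_atTop
  refine squeeze_zero_norm' ?_ (hbound.mono_left inf_le_left)
  refine eventually_inf_principal.mpr (Eventually.of_forall fun n hn => ?_)
  exact norm_witness_average_le hn.1 hn.2.1 hn.2.2 hk
end
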